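/- For all real numbers a > 0, b > 0 and every x₀ ∈ [0, 1/2], the quotient seminorm of the class of (x₀, 0) in ℝ²/Λ(a,b) satisfies b·x₀/√(a² + b²) ≤ ‖[(x₀, 0)]‖ ≤ b·x₀/√(a² + b²) + √(a² + b²)/2. (Thus the distance in ℝ²/Λ(a,b) between [(0,0)] and [(x₀,0)] equals, up to an error of at most √(a²+b²)/2, the distance from the origin to the line b x + a y = b x₀ in ℝ².) -/

import Mathlib

/-!
The lattice `Λ(a,b)` is also generated by `1` and `w = -a + b i`, of norm `r = √(a² + b²)`.
The linear form `ℓ(x, y) = b x + a y` has operator norm `r`, kills `w` and sends `1` to `b`.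

Lower bound: `ℓ` takes values `b (x₀ + k)`, `k ∈ ℤ`, on the class of `x₀`, and
`x₀ ≤ |x₀ + k|` because `0 ≤ x₀ ≤ 1/2`; hence every representative has norm at least `b x₀ / r`.

Upper bound: the foot of the perpendicular from the origin to the line `ℓ = b x₀` is `x₀ + t w` with
`t = a x₀ / r²`, and has norm `b x₀ / r`. Rounding `t` to the nearest integer `n` gives a
representative `x₀ + n w` of the class at distance at most `r / 2` from the foot.
-/

open Filter Topology

/-- The additive subgroup `Λ(a,b)` of the Euclidean plane (identified with `ℂ`,
whose norm is the Euclidean norm `‖x + y√-1‖ = √(x² + y²)`), generated by the two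
vectors `(1, 0)` and `(1 - a, b)`. -/
noncomputable def Lambda (a b : ℝ) : AddSubgroup ℂ :=
  AddSubgroup.closure {(1 : ℂ), (↑(1 - a) + ↑b * Complex.I : ℂ)}

lemma norm_neg_add_mul_I (a b : ℝ) :
    ‖(-a + b * Complex.I : ℂ)‖ = Real.sqrt (a ^ 2 + b ^ 2) := by
  have := Complex.norm_add_mul_I (-a) b
  push_cast at this
  rw [this, neg_sq]

lemma neg_add_mul_I_mem_Lambda (a b : ℝ) : (-a + b * Complex.I : ℂ) ∈ Lambda a b := by
  refine AddSubgroup.mem_closure_pair.2 ⟨-1, 1, ?_⟩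
  simp
  ring

/-- Cauchy–Schwarz for the linear form `b x + a y`. -/
lemma abs_form_le (a b : ℝ) (z : ℂ) :
    |b * z.re + a * z.im| ≤ Real.sqrt (a ^ 2 + b ^ 2) * ‖z‖ := by
  rw [← Real.sqrt_sq (norm_nonneg z), ← Real.sqrt_mul (by positivity), Complex.sq_norm,
    Complex.normSq_apply]
  apply Real.abs_le_sqrt
  nlinarith [sq_nonneg (b * z.im - a * z.re)]

/-- On `Λ(a,b)` the linear form `b x + a y` takes values in `bℤ`. -/
lemma exists_form_eq_of_mem {a b : ℝ} {z : ℂ} (hz : z ∈ Lambda a b) :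
    ∃ k : ℤ, b * z.re + a * z.im = b * k := by
  obtain ⟨m, n, rfl⟩ := AddSubgroup.mem_closure_pair.1 hz
  refine ⟨m + n, ?_⟩
  simp
  ring

lemma le_abs_add_intCast {x : ℝ} (hx : x ∈ Set.Icc (0 : ℝ) (1 / 2)) (k : ℤ) :
    x ≤ |x + k| := by
  obtain ⟨h0, h1⟩ := hx
  rcases le_or_gt 0 k with hk | hk
  · have : (0 : ℝ) ≤ k := by exact_mod_cast hk
    exact le_trans (by linarith) (le_abs_self _)
  · have : (k : ℝ) ≤ -1 := by exact_mod_cast Int.le_sub_one_of_lt hk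
    exact le_trans (by linarith) (neg_le_abs _)

/-- The foot of the perpendicular from the origin to the line `b x + a y = b x₀`
has norm `b x₀ / √(a² + b²)`. -/
lemma norm_foot {a b x₀ : ℝ} (hb : 0 < b) (hx : 0 ≤ x₀) :
    ‖(x₀ + (a * x₀ / (a ^ 2 + b ^ 2) : ℝ) * (-a + b * Complex.I) : ℂ)‖ =
      b * x₀ / Real.sqrt (a ^ 2 + b ^ 2) := by
  have hD : 0 < a ^ 2 + b ^ 2 := by positivity
  rw [← sq_eq_sq₀ (norm_nonneg _) (by positivity), div_pow, Real.sq_sqrt hD.le, Complex.sq_norm,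
    Complex.normSq_apply]
  simp only [Complex.add_re, Complex.add_im, Complex.re_ofReal_mul, Complex.im_ofReal_mul,
    Complex.ofReal_re, Complex.ofReal_im, Complex.neg_re, Complex.neg_im, Complex.I_re,
    Complex.I_im]
  field_simp
  ring

/-- For all real numbers `a > 0`, `b > 0` and every `x₀ ∈ [0, 1/2]`,
the quotient seminorm of the class of `(x₀, 0)` in `ℝ²/Λ(a,b)` satisfies
`b·x₀/√(a² + b²) ≤ ‖[(x₀, 0)]‖ ≤ b·x₀/√(a² + b²) + √(a² + b²)/2`.
(Thus the distance in `ℝ²/Λ(a,b)` between `[(0,0)]` and `[(x₀,0)]` equals, up to an error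
of at most `√(a²+b²)/2`, the distance from the origin to the line `b x + a y = b x₀`.) -/
theorem quotient_norm_of_real_point (a b : ℝ) (ha : 0 < a) (hb : 0 < b)
    (x₀ : ℝ) (hx₀ : x₀ ∈ Set.Icc (0 : ℝ) (1 / 2)) :
    b * x₀ / Real.sqrt (a ^ 2 + b ^ 2) ≤ ‖((x₀ : ℂ) : ℂ ⧸ Lambda a b)‖ ∧
      ‖((x₀ : ℂ) : ℂ ⧸ Lambda a b)‖ ≤
        b * x₀ / Real.sqrt (a ^ 2 + b ^ 2) + Real.sqrt (a ^ 2 + b ^ 2) / 2 := by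
  have hr : 0 < Real.sqrt (a ^ 2 + b ^ 2) := by positivity
  constructor
  · refine QuotientAddGroup.le_norm_iff.2 fun m hm ↦ ?_
    obtain ⟨k, hk⟩ := exists_form_eq_of_mem (QuotientAddGroup.eq.1 hm.symm)
    have hform : b * m.re + a * m.im = b * (x₀ + k) := by
      simp at hk
      linarith
    rw [div_le_iff₀' hr]
    calc b * x₀ ≤ b * |x₀ + k| := by gcongr; exact le_abs_add_intCast hx₀ k
      _ = |b * m.re + a * m.im| := by rw [hform, abs_mul, abs_of_pos hb]
      _ ≤ _ := abs_form_le a b m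
  · set w : ℂ := -a + b * Complex.I with hw
    set t : ℝ := a * x₀ / (a ^ 2 + b ^ 2) with ht
    have hclass : ((x₀ : ℂ) : ℂ ⧸ Lambda a b) = ((x₀ + round t • w : ℂ) : ℂ ⧸ Lambda a b) := by
      rw [QuotientAddGroup.eq, neg_add_cancel_left]
      exact zsmul_mem (neg_add_mul_I_mem_Lambda a b) _
    have hround : ‖((round t - t : ℝ) : ℂ)‖ ≤ 1 / 2 := by
      rw [Complex.norm_real, Real.norm_eq_abs, abs_sub_comm]
      exact abs_sub_round t
    calc ‖((x₀ : ℂ) : ℂ ⧸ Lambda a b)‖ ≤ ‖(x₀ + round t • w : ℂ)‖ := by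
          rw [hclass]
          exact QuotientAddGroup.norm_mk_le_norm
      _ = ‖(x₀ + t * w) + ((round t - t : ℝ) : ℂ) * w‖ := by
          congr 1
          rw [zsmul_eq_mul]
          push_cast
          ring
      _ ≤ ‖x₀ + t * w‖ + ‖((round t - t : ℝ) : ℂ)‖ * ‖w‖ := by
          rw [← norm_mul]
          exact norm_add_le _ _
      _ ≤ b * x₀ / Real.sqrt (a ^ 2 + b ^ 2) + 1 / 2 * Real.sqrt (a ^ 2 + b ^ 2) := by
          rw [norm_foot hb hx₀.1, norm_neg_add_mul_I]
          gcongr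
      _ = _ := by ring
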